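/- Let Δt > 0, λ > 0, and τ > 0. Let M_L⁻, M_L⁺, M_R⁻, M_R⁺ ∈ ℝ⁵ each be of three-point HyQMOM form with ρ₁, ρ₂, ρ₃ > 0 and v₁ < v₂ < v₃ (each state with its own parameters), with interface speeds δ_L±, δ_R± and HLL fluxes F̂_L, F̂_R as in the HLL construction, and cell average M̄ = ½(M_L⁺ + M_R⁻). Set ρ = M̄₀, U = M̄₁/M̄₀, θ = M̄₂/M̄₀ − U² (note that θ > 0 holds automatically here), and let G = ρ·(1, U, U² + θ, U³ + 3Uθ, U⁴ + 6U²θ + 3θ²) be the Maxwellian moment vector. Define the semi-implicit update M_new by (1 + Δt/τ) M_new = M̄ − λ(F̂_R − F̂_L) + (Δt/τ) G. If λ(δ_L⁺ − δ_L⁻) ≤ ½ and λ(δ_R⁺ − δ_R⁻) ≤ ½, then H₂(M_new) is positive definite. -/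

import Mathlib

/-- The `3×3` Hankel matrix `H₂(c)` of a vector `c ∈ ℝ⁵`, with `(j,k)` entry `c_{j+k}`. -/
noncomputable def hankel2 (c : Fin 5 → ℝ) : Matrix (Fin 3) (Fin 3) ℝ :=
  Matrix.of fun j k => c ⟨j.1 + k.1, by have := j.isLt; have := k.isLt; omega⟩

/-- Parameters of a three-point HyQMOM state: positive weights and ordered abscissas. -/
structure HyqParams where
  r1 : ℝ
  r2 : ℝ
  r3 : ℝ
  v1 : ℝ
  v2 : ℝ
  v3 : ℝ
  hr1 : 0 < r1
  hr2 : 0 < r2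
  hr3 : 0 < r3
  h12 : v1 < v2
  h23 : v2 < v3

/-- Moment vector `M_k = ρ₁v₁^k + ρ₂v₂^k + ρ₃v₃^k`, `k = 0,…,4`. -/
noncomputable def HyqParams.M (W : HyqParams) : Fin 5 → ℝ :=
  fun k => W.r1 * W.v1 ^ k.1 + W.r2 * W.v2 ^ k.1 + W.r3 * W.v3 ^ k.1

/-- Flux vector `F(M) = (M₁,…,M₄,M₅)` with `M₅ = ρ₁v₁⁵ + ρ₂v₂⁵ + ρ₃v₃⁵`. -/
noncomputable def HyqParams.F (W : HyqParams) : Fin 5 → ℝ :=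
  fun k => W.r1 * W.v1 ^ (k.1 + 1) + W.r2 * W.v2 ^ (k.1 + 1) + W.r3 * W.v3 ^ (k.1 + 1)

/-- Wave speed `δ⁺(M) = max{v₁, v₂, v₃, 0}`. -/
noncomputable def HyqParams.dp (W : HyqParams) : ℝ :=
  max (max (max W.v1 W.v2) W.v3) 0

/-- Wave speed `δ⁻(M) = min{v₁, v₂, v₃, 0}`. -/
noncomputable def HyqParams.dm (W : HyqParams) : ℝ :=
  min (min (min W.v1 W.v2) W.v3) 0

/-- HLL numerical flux
`F̂(M⁻,M⁺) = (δ̂⁺F(M⁻) − δ̂⁻F(M⁺) + δ̂⁺δ̂⁻(M⁺ − M⁻))/(δ̂⁺ − δ̂⁻)`. -/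
noncomputable def hllFlux (dp dm : ℝ) (Mm Mp Fm Fp : Fin 5 → ℝ) : Fin 5 → ℝ :=
  fun k => (dp * Fm k - dm * Fp k + dp * dm * (Mp k - Mm k)) / (dp - dm)

/-- Maxwellian moment vector `G = ρ(1, U, U²+θ, U³+3Uθ, U⁴+6U²θ+3θ²)`. -/
noncomputable def maxwellMoments (ρ U θ : ℝ) : Fin 5 → ℝ :=
  ![ρ, ρ * U, ρ * (U ^ 2 + θ), ρ * (U ^ 3 + 3 * U * θ),
    ρ * (U ^ 4 + 6 * U ^ 2 * θ + 3 * θ ^ 2)]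

/-!
For weights `ρᵢ` at nodes `vᵢ`, the Hankel matrix of the moments is `Vᵀ diag(ρ) V` with `V` the
Vandermonde matrix of the nodes, and passing from moments to fluxes replaces `ρᵢ` by `ρᵢ vᵢ`. Hence
`a ≤ vᵢ ≤ b` gives `a • H₂(M) ≤ H₂(F) ≤ b • H₂(M)` in the Loewner order. The gap
`δ⁺ • M⁻ - F̂` is a nonnegative combination of `δ⁺ • M⁻ - F(M⁻)` and `δ⁺ • M⁺ - F(M⁺)`, and
symmetrically for `F̂ - δ⁻ • M⁺`; so `δ⁻ • H₂(M⁺) ≤ H₂(F̂) ≤ δ⁺ • H₂(M⁻)`, and under the CFL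
condition the transport part of the update has a positive semidefinite Hankel matrix. The Maxwellian
has the moments of the three-point Gauss–Hermite rule at `U`, `U ± √(3θ)`, so its Hankel matrix is
positive definite, and the relaxation term makes the whole update positive definite.
-/

open scoped MatrixOrder

section HLL

/-- The HLL flux formula in an arbitrary vector space, so that it can be applied to Hankel matrices
as well as to moment vectors. The fastest and slowest wave speeds are `p` and `m`. -/
def hllCombination {𝕜 E : Type*} [Field 𝕜] [AddCommGroup E] [Module 𝕜 E] (p m : 𝕜)
    (Mm Mp Fm Fp : E) : E :=
  (p - m)⁻¹ • (p • Fm - m • Fp + (p * m) • (Mp - Mm))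

/-- The reflection `x ↦ -x` swaps the two sides of the interface and reverses the flux. -/
theorem hllCombination_reflect {𝕜 E : Type*} [Field 𝕜] [AddCommGroup E] [Module 𝕜 E] (p m : 𝕜)
    (Mm Mp Fm Fp : E) :
    hllCombination (-m) (-p) Mp Mm (-Fp) (-Fm) = -hllCombination p m Mm Mp Fm Fp := by
  simp only [hllCombination, show -m - -p = p - m by ring]
  module

variable {𝕜 E : Type*} [Field 𝕜] [LinearOrder 𝕜] [IsStrictOrderedRing 𝕜]
  [AddCommGroup E] [PartialOrder E] [IsOrderedAddMonoid E] [Module 𝕜 E] [PosSMulMono 𝕜 E]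

theorem hllCombination_le {p m : 𝕜} {Mm Mp Fm Fp : E} (hp : 0 ≤ p) (hm : m ≤ 0) (hmp : m < p)
    (hFm : Fm ≤ p • Mm) (hFp : Fp ≤ p • Mp) : hllCombination p m Mm Mp Fm Fp ≤ p • Mm := by
  have hpm : 0 < p - m := sub_pos.2 hmp
  have gap : p • Mm - hllCombination p m Mm Mp Fm Fp =
      (p - m)⁻¹ • (p • (p • Mm - Fm) + (-m) • (p • Mp - Fp)) := by
    have hne := hpm.ne'
    unfold hllCombination
    match_scalars
    all_goals field_simp
    all_goals ring
  rw [← sub_nonneg, gap]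
  exact smul_nonneg (inv_nonneg.2 hpm.le) <| add_nonneg
    (smul_nonneg hp (sub_nonneg.2 hFm)) (smul_nonneg (neg_nonneg.2 hm) (sub_nonneg.2 hFp))

theorem le_hllCombination {p m : 𝕜} {Mm Mp Fm Fp : E} (hp : 0 ≤ p) (hm : m ≤ 0) (hmp : m < p)
    (hFm : m • Mm ≤ Fm) (hFp : m • Mp ≤ Fp) : m • Mp ≤ hllCombination p m Mm Mp Fm Fp := by
  have reflected := hllCombination_le (p := -m) (m := -p) (Mm := Mp) (Mp := Mm) (Fm := -Fp)
    (Fp := -Fm) (neg_nonneg.2 hm) (neg_nonpos.2 hp) (neg_lt_neg hmp) (by simpa using hFp)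
    (by simpa using hFm)
  rwa [hllCombination_reflect, neg_smul, neg_le_neg_iff] at reflected

theorem average_sub_smul_flux_sub_nonneg {lam m p : 𝕜} {A B FL FR : E} (hlam : 0 ≤ lam)
    (hA : 0 ≤ A) (hB : 0 ≤ B) (hFL : m • A ≤ FL) (hFR : FR ≤ p • B)
    (hm : -(1 / 2) ≤ lam * m) (hp : lam * p ≤ 1 / 2) :
    0 ≤ (1 / 2 : 𝕜) • (A + B) - lam • (FR - FL) := by
  have split : (1 / 2 : 𝕜) • (A + B) - lam • (FR - FL) =
      (lam * m - -(1 / 2)) • A + lam • (FL - m • A) +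
        ((1 / 2 - lam * p) • B + lam • (p • B - FR)) := by
    module
  rw [split]
  exact add_nonneg
    (add_nonneg (smul_nonneg (sub_nonneg.2 hm) hA) (smul_nonneg hlam (sub_nonneg.2 hFL)))
    (add_nonneg (smul_nonneg (sub_nonneg.2 hp) hB) (smul_nonneg hlam (sub_nonneg.2 hFR)))

end HLL

section Hankel

theorem hankel2_add (c d : Fin 5 → ℝ) : hankel2 (c + d) = hankel2 c + hankel2 d := rfl

theorem hankel2_sub (c d : Fin 5 → ℝ) : hankel2 (c - d) = hankel2 c - hankel2 d := rfl

theorem hankel2_smul (a : ℝ) (c : Fin 5 → ℝ) : hankel2 (a • c) = a • hankel2 c := rfl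

theorem hankel2_hllFlux (p m : ℝ) (Mm Mp Fm Fp : Fin 5 → ℝ) :
    hankel2 (hllFlux p m Mm Mp Fm Fp) =
      hllCombination p m (hankel2 Mm) (hankel2 Mp) (hankel2 Fm) (hankel2 Fp) := by
  ext i j
  simp [hankel2, hllFlux, hllCombination, div_eq_inv_mul]

theorem zeroth_moment_pos {c : Fin 5 → ℝ} (hc : (hankel2 c).PosDef) : 0 < c 0 :=
  hc.diag_pos (i := 0)

theorem temperature_pos {c : Fin 5 → ℝ} (hc : (hankel2 c).PosDef) :
    0 < c 2 / c 0 - (c 1 / c 0) ^ 2 := by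
  have hc0 := zeroth_moment_pos hc
  have minor_pos := (hc.submatrix (Fin.castSucc_injective 2)).det_pos
  have minor : ((hankel2 c).submatrix Fin.castSucc Fin.castSucc).det = c 0 * c 2 - c 1 * c 1 :=
    Matrix.det_fin_two _
  rw [minor] at minor_pos
  have : c 2 / c 0 - (c 1 / c 0) ^ 2 = (c 0 * c 2 - c 1 * c 1) / c 0 ^ 2 := by
    field_simp
  rw [this]
  positivity

end Hankel

section Quadrature

variable {ι : Type*} [Fintype ι]

/-- The moments of order `0, …, 4` of the discrete measure with weights `ρ` at the nodes `v`. -/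
def quadratureMoments (ρ v : ι → ℝ) : Fin 5 → ℝ := fun k => ∑ i, ρ i * v i ^ k.1

theorem quadratureMoments_sub (ρ σ v : ι → ℝ) :
    quadratureMoments (ρ - σ) v = quadratureMoments ρ v - quadratureMoments σ v := by
  ext k
  simp [quadratureMoments, sub_mul]

theorem quadratureMoments_smul (a : ℝ) (ρ v : ι → ℝ) :
    quadratureMoments (a • ρ) v = a • quadratureMoments ρ v := by
  ext k
  simp [quadratureMoments, Finset.mul_sum, mul_assoc]

theorem hankel2_quadratureMoments [DecidableEq ι] (ρ v : ι → ℝ) :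
    hankel2 (quadratureMoments ρ v) =
      (Matrix.rectVandermonde v 1 3).conjTranspose * Matrix.diagonal ρ *
        Matrix.rectVandermonde v 1 3 := by
  ext j k
  rw [Matrix.mul_apply]
  simp only [hankel2, quadratureMoments, Matrix.of_apply, Matrix.mul_diagonal,
    Matrix.conjTranspose_apply, Matrix.rectVandermonde_apply, Pi.one_apply, one_pow, mul_one,
    star_trivial]
  exact Finset.sum_congr rfl fun i _ => by ring

theorem hankel2_quadratureMoments_mono {ρ σ : ι → ℝ} (v : ι → ℝ) (h : ρ ≤ σ) :
    hankel2 (quadratureMoments ρ v) ≤ hankel2 (quadratureMoments σ v) := by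
  classical
  rw [Matrix.le_iff, ← hankel2_sub, ← quadratureMoments_sub, hankel2_quadratureMoments]
  exact (Matrix.PosSemidef.diagonal (sub_nonneg.2 h)).conjTranspose_mul_mul_same _

theorem rectVandermonde_mulVec_injective {n : ℕ} {v : ι → ℝ} (hv : Function.Injective v)
    (hn : n ≤ Fintype.card ι) : Function.Injective (Matrix.rectVandermonde v 1 n).mulVec := by
  rw [← Matrix.coe_mulVecLin, injective_iff_map_eq_zero]
  intro x hx
  obtain ⟨e⟩ : Nonempty (Fin n ↪ ι) := Function.Embedding.nonempty_of_card_le (by simpa)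
  refine Matrix.eq_zero_of_forall_index_sum_pow_mul_eq_zero (hv.comp e.injective) fun j => ?_
  simpa [Matrix.mulVec, dotProduct, Matrix.rectVandermonde_apply] using congrFun hx (e j)

theorem hankel2_quadratureMoments_posDef {ρ v : ι → ℝ} (hρ : ∀ i, 0 < ρ i)
    (hv : Function.Injective v) (hι : 3 ≤ Fintype.card ι) :
    (hankel2 (quadratureMoments ρ v)).PosDef := by
  classical
  rw [hankel2_quadratureMoments]
  exact (Matrix.PosDef.diagonal hρ).conjTranspose_mul_mul_same
    (rectVandermonde_mulVec_injective hv hι)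

theorem hankel2_quadratureMoments_mul_le {ρ v : ι → ℝ} {b : ℝ} (hρ : 0 ≤ ρ) (hv : ∀ i, v i ≤ b) :
    hankel2 (quadratureMoments (ρ * v) v) ≤ b • hankel2 (quadratureMoments ρ v) := by
  rw [← hankel2_smul, ← quadratureMoments_smul]
  refine hankel2_quadratureMoments_mono v fun i => ?_
  simpa [mul_comm b] using mul_le_mul_of_nonneg_left (hv i) (hρ i)

theorem le_hankel2_quadratureMoments_mul {ρ v : ι → ℝ} {a : ℝ} (hρ : 0 ≤ ρ) (hv : ∀ i, a ≤ v i) :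
    a • hankel2 (quadratureMoments ρ v) ≤ hankel2 (quadratureMoments (ρ * v) v) := by
  rw [← hankel2_smul, ← quadratureMoments_smul]
  refine hankel2_quadratureMoments_mono v fun i => ?_
  simpa [mul_comm a] using mul_le_mul_of_nonneg_left (hv i) (hρ i)

end Quadrature

section Maxwellian

/-- The Maxwellian moment vector with the density, mean velocity and temperature of `c`. -/
noncomputable def maxwellianOf (c : Fin 5 → ℝ) : Fin 5 → ℝ :=
  maxwellMoments (c 0) (c 1 / c 0) (c 2 / c 0 - (c 1 / c 0) ^ 2)

theorem maxwellMoments_eq_quadratureMoments (ρ U : ℝ) {θ : ℝ} (hθ : 0 ≤ θ) :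
    maxwellMoments ρ U θ =
      quadratureMoments ![ρ / 6, 2 * ρ / 3, ρ / 6] ![U - √(3 * θ), U, U + √(3 * θ)] := by
  have hs : √(3 * θ) ^ 2 = 3 * θ := Real.sq_sqrt (by positivity)
  have hs4 : √(3 * θ) ^ 4 = 9 * θ ^ 2 := by linear_combination (√(3 * θ) ^ 2 + 3 * θ) * hs
  generalize √(3 * θ) = s at hs hs4 ⊢
  ext k
  fin_cases k <;> simp [maxwellMoments, quadratureMoments, Fin.sum_univ_three]
  · ring
  · ring
  · linear_combination (-ρ / 3) * hs
  · linear_combination (-ρ * U) * hs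
  · linear_combination (-2 * ρ * U ^ 2) * hs - ρ / 3 * hs4

theorem hankel2_maxwellMoments_posDef {ρ U θ : ℝ} (hρ : 0 < ρ) (hθ : 0 < θ) :
    (hankel2 (maxwellMoments ρ U θ)).PosDef := by
  rw [maxwellMoments_eq_quadratureMoments ρ U hθ.le]
  refine hankel2_quadratureMoments_posDef ?_ (StrictMono.injective ?_) (by simp)
  · simp [Fin.forall_fin_succ, hρ]
  · simp [Fin.strictMono_iff_lt_succ, Fin.forall_fin_succ, hθ]

theorem hankel2_maxwellianOf_posDef {c : Fin 5 → ℝ} (hc : (hankel2 c).PosDef) :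
    (hankel2 (maxwellianOf c)).PosDef :=
  hankel2_maxwellMoments_posDef (zeroth_moment_pos hc) (temperature_pos hc)

end Maxwellian

namespace HyqParams

variable (W : HyqParams)

/-- The abscissas `(v₁, v₂, v₃)` as a vector. -/
def nodes : Fin 3 → ℝ := ![W.v1, W.v2, W.v3]

/-- The weights `(ρ₁, ρ₂, ρ₃)` as a vector. -/
def weights : Fin 3 → ℝ := ![W.r1, W.r2, W.r3]

theorem M_eq_quadratureMoments : W.M = quadratureMoments W.weights W.nodes := by
  ext k
  simp [M, quadratureMoments, weights, nodes, Fin.sum_univ_three]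

theorem F_eq_quadratureMoments : W.F = quadratureMoments (W.weights * W.nodes) W.nodes := by
  ext k
  simp [F, quadratureMoments, weights, nodes, Fin.sum_univ_three, pow_succ', mul_assoc]

theorem weights_pos : ∀ i, 0 < W.weights i := by
  simp [weights, Fin.forall_fin_succ, W.hr1, W.hr2, W.hr3]

theorem nodes_strictMono : StrictMono W.nodes := by
  simp [nodes, Fin.strictMono_iff_lt_succ, Fin.forall_fin_succ, W.h12, W.h23]

theorem nodes_le_dp : ∀ i, W.nodes i ≤ W.dp := by
  simp [nodes, dp, Fin.forall_fin_succ]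

theorem dm_le_nodes : ∀ i, W.dm ≤ W.nodes i := by
  simp [nodes, dm, Fin.forall_fin_succ]

theorem dp_nonneg : 0 ≤ W.dp := le_max_right _ _

theorem dm_nonpos : W.dm ≤ 0 := min_le_right _ _

theorem dm_lt_dp : W.dm < W.dp :=
  (W.dm_le_nodes 0).trans_lt <| (W.nodes_strictMono (by decide : (0 : Fin 3) < 1)).trans_le
    (W.nodes_le_dp 1)

theorem max_dp_nonneg (A B : HyqParams) : 0 ≤ max A.dp B.dp :=
  A.dp_nonneg.trans (le_max_left _ _)

theorem min_dm_nonpos (A B : HyqParams) : min A.dm B.dm ≤ 0 :=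
  (min_le_left _ _).trans A.dm_nonpos

theorem min_dm_lt_max_dp (A B : HyqParams) : min A.dm B.dm < max A.dp B.dp :=
  (min_le_left _ _).trans_lt (A.dm_lt_dp.trans_le (le_max_left _ _))

theorem hankel2_M_posDef : (hankel2 W.M).PosDef := by
  rw [M_eq_quadratureMoments]
  exact hankel2_quadratureMoments_posDef W.weights_pos W.nodes_strictMono.injective (by simp)

variable {W}

theorem hankel2_F_le {b : ℝ} (hb : W.dp ≤ b) : hankel2 W.F ≤ b • hankel2 W.M := by
  rw [M_eq_quadratureMoments, F_eq_quadratureMoments]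
  exact hankel2_quadratureMoments_mul_le (fun i => (W.weights_pos i).le)
    fun i => (W.nodes_le_dp i).trans hb

theorem le_hankel2_F {a : ℝ} (ha : a ≤ W.dm) : a • hankel2 W.M ≤ hankel2 W.F := by
  rw [M_eq_quadratureMoments, F_eq_quadratureMoments]
  exact le_hankel2_quadratureMoments_mul (fun i => (W.weights_pos i).le)
    fun i => ha.trans (W.dm_le_nodes i)

end HyqParams

/-- The Loewner bounds `hFLm`, `hFLp`, `hFRm`, `hFRp` are the speed bounds of the closure: if `M`
and `F` are the moments of orders `0, …, 4` and `1, …, 5` of a nonnegative measure, they hold as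
soon as its support lies in `[mL, ∞)` at the left interface and in `(-∞, pR]` at the right one. -/
theorem hyqmom_hll_bgk_semiImplicit_posDef_general {κ lam pL mL pR mR : ℝ}
    {MLm MLp MRm MRp FLm FLp FRm FRp Mbar Mnew : Fin 5 → ℝ} (hκ : 0 < κ) (hlam : 0 ≤ lam)
    (hpL : 0 ≤ pL) (hmL : mL ≤ 0) (hL : mL < pL) (hpR : 0 ≤ pR) (hmR : mR ≤ 0) (hR : mR < pR)
    (hMLp : (hankel2 MLp).PosDef) (hMRm : (hankel2 MRm).PosDef)
    (hFLm : mL • hankel2 MLm ≤ hankel2 FLm) (hFLp : mL • hankel2 MLp ≤ hankel2 FLp)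
    (hFRm : hankel2 FRm ≤ pR • hankel2 MRm) (hFRp : hankel2 FRp ≤ pR • hankel2 MRp)
    (hCFL_L : -(1 / 2) ≤ lam * mL) (hCFL_R : lam * pR ≤ 1 / 2)
    (hMbar : Mbar = (1 / 2 : ℝ) • (MLp + MRm))
    (hMnew : (1 + κ) • Mnew = Mbar -
      lam • (hllFlux pR mR MRm MRp FRm FRp - hllFlux pL mL MLm MLp FLm FLp) +
        κ • maxwellianOf Mbar) :
    (hankel2 Mnew).PosDef := by
  have maxwellian_posDef : (hankel2 (maxwellianOf Mbar)).PosDef := by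
    refine hankel2_maxwellianOf_posDef ?_
    rw [hMbar, hankel2_smul, hankel2_add]
    exact (hMLp.add hMRm).smul (by norm_num)
  have transport_nonneg : 0 ≤ hankel2 (Mbar -
      lam • (hllFlux pR mR MRm MRp FRm FRp - hllFlux pL mL MLm MLp FLm FLp)) := by
    simp only [hMbar, hankel2_sub, hankel2_smul, hankel2_add, hankel2_hllFlux]
    exact average_sub_smul_flux_sub_nonneg hlam hMLp.posSemidef.nonneg hMRm.posSemidef.nonneg
      (le_hllCombination hpL hmL hL hFLm hFLp) (hllCombination_le hpR hmR hR hFRm hFRp)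
      hCFL_L hCFL_R
  have scaled_posDef : ((1 + κ) • hankel2 Mnew).PosDef := by
    rw [← hankel2_smul, hMnew, hankel2_add, hankel2_smul]
    exact (maxwellian_posDef.smul hκ).posSemidef_add
      (Matrix.nonneg_iff_posSemidef.1 transport_nonneg)
  have hκ' : 0 < 1 + κ := by positivity
  simpa [inv_smul_smul₀ hκ'.ne'] using scaled_posDef.smul (inv_pos.2 hκ')

/-- realizability of the semi-implicit BGK HLL finite-volume update for the
three-point HyQMOM closure.  With `M̄ = ½(M_L⁺ + M_R⁻)`, `ρ = M̄₀`, `U = M̄₁/M̄₀`,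
`θ = M̄₂/M̄₀ − U²`, `G` the Maxwellian moment vector, and `M_new` the solution of
`(1 + Δt/τ)M_new = M̄ − λ(F̂_R − F̂_L) + (Δt/τ)G`, the CFL conditions `λ(δ⁺ − δ⁻) ≤ 1/2`
at both interfaces imply that `H₂(M_new)` is positive definite. -/
theorem hyqmom_hll_bgk_semiImplicit_posDef (Δt lam τ : ℝ)
    (hΔt : 0 < Δt) (hlam : 0 < lam) (hτ : 0 < τ)
    (WLm WLp WRm WRp : HyqParams)
    (dLp dLm dRp dRm : ℝ)
    (hdLp : dLp = max WLm.dp WLp.dp)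
    (hdLm : dLm = min WLm.dm WLp.dm)
    (hdRp : dRp = max WRm.dp WRp.dp)
    (hdRm : dRm = min WRm.dm WRp.dm)
    (FL FR : Fin 5 → ℝ)
    (hFL : FL = hllFlux dLp dLm WLm.M WLp.M WLm.F WLp.F)
    (hFR : FR = hllFlux dRp dRm WRm.M WRp.M WRm.F WRp.F)
    (Mbar : Fin 5 → ℝ) (hMbar : ∀ k, Mbar k = (WLp.M k + WRm.M k) / 2)
    (G : Fin 5 → ℝ)
    (hG : G = maxwellMoments (Mbar 0) (Mbar 1 / Mbar 0)
        (Mbar 2 / Mbar 0 - (Mbar 1 / Mbar 0) ^ 2))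
    (Mnew : Fin 5 → ℝ)
    (hMnew : ∀ k, (1 + Δt / τ) * Mnew k = Mbar k - lam * (FR k - FL k) + Δt / τ * G k)
    (hCFL_L : lam * (dLp - dLm) ≤ 1 / 2)
    (hCFL_R : lam * (dRp - dRm) ≤ 1 / 2) :
    (hankel2 Mnew).PosDef := by
  have mean_eq : Mbar = (1 / 2 : ℝ) • (WLp.M + WRm.M) := by
    ext k
    simp [hMbar, div_eq_inv_mul]
  subst hdLp hdLm hdRp hdRm hFL hFR hG
  open HyqParams in
  exact hyqmom_hll_bgk_semiImplicit_posDef_general (div_pos hΔt hτ) hlam.le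
    (max_dp_nonneg _ _) (min_dm_nonpos _ _) (min_dm_lt_max_dp _ _)
    (max_dp_nonneg _ _) (min_dm_nonpos _ _) (min_dm_lt_max_dp _ _)
    WLp.hankel2_M_posDef WRm.hankel2_M_posDef
    (le_hankel2_F (min_le_left _ _)) (le_hankel2_F (min_le_right _ _))
    (hankel2_F_le (le_max_left _ _)) (hankel2_F_le (le_max_right _ _))
    (by linarith [mul_nonneg hlam.le (max_dp_nonneg WLm WLp)])
    (by linarith [mul_nonpos_of_nonneg_of_nonpos hlam.le (min_dm_nonpos WRm WRp)])
    mean_eq (funext hMnew)
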